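/- arXiv:1312.7375 — 2 statements merged into one kernel-verified Lean document; each statement's English description precedes it below -/
import Mathlib

section
/- Let σ > 0, γ° > 0, γ ≥ 0 be real numbers, and let a, c, c°, B, B° ∈ ℝ with (c°, B°) ≠ (0, 0). Suppose that for every x ∈ ℝ, a·σ²·x² + (c·σ²·x² + B)·F(σx, γ) − (c°·σ²·x² + B°)·F(σx, γ°) = 0. Then a = 0, c = c°, B = B°, and γ = γ°. -/
/-- The smooth transition function of the STGARCH model:
`F(x, γ) = 1/(1+e^{γx}) - 1/2`. -/
noncomputable def stgarchF (x γ : ℝ) : ℝ := 1 / (1 + Real.exp (γ * x)) - 1 / 2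

/-! Up to the constant `-1/2`, the transition `stgarchF x γ` is the tail `sigmoid (-(γ * x))`, which
decays like `exp (-γ x)` as `x → ∞` and so is negligible against polynomials. Hence an identity
between polynomial multiples of transitions splits for large `x` into an identity between
polynomials and one between tails; since tails with different `γ` decay at different exponential
rates, the latter forces both the rates and the polynomial coefficients to agree.
-/

open Polynomial Filter Asymptotics Topology

lemma polynomial_eq_zero_of_tendsto_zero {p : ℝ[X]}
    (h : Tendsto (fun x ↦ p.eval x) atTop (𝓝 0)) : p = 0 :=
  leadingCoeff_eq_zero.mp (p.tendsto_nhds_iff.mp h).1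

lemma polynomial_eq_of_eventually_eval_eq {p q : ℝ[X]}
    (h : ∀ᶠ x in atTop, p.eval x = q.eval x) : p = q := by
  refine sub_eq_zero.mp (polynomial_eq_zero_of_tendsto_zero ?_)
  refine tendsto_const_nhds.congr' ?_
  filter_upwards [h] with x hx
  rw [eval_sub, hx, sub_self]

lemma polynomial_isLittleO_exp_mul (p : ℝ[X]) {b : ℝ} (hb : 0 < b) :
    p.eval =o[atTop] fun x ↦ Real.exp (b * x) := by
  have hX : p.eval =O[atTop] (X ^ p.natDegree : ℝ[X]).eval :=
    isBigO_atTop_of_degree_le _ _ (by simpa only [degree_X_pow] using degree_le_natDegree)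
  refine hX.trans_isLittleO ?_
  simpa only [eval_pow, eval_X] using isLittleO_pow_exp_pos_mul_atTop p.natDegree hb

lemma sigmoid_neg_le_exp_neg (y : ℝ) : Real.sigmoid (-y) ≤ Real.exp (-y) := by
  rw [← Real.sigmoid_mul_rexp_neg]
  exact mul_le_of_le_one_left (Real.exp_nonneg _) (Real.sigmoid_le_one y)

lemma exp_neg_le_two_mul_sigmoid_neg {y : ℝ} (hy : 0 ≤ y) :
    Real.exp (-y) ≤ 2 * Real.sigmoid (-y) := by
  have half_le : 2⁻¹ ≤ Real.sigmoid y := Real.sigmoid_zero ▸ Real.sigmoid_le hy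
  rw [← Real.sigmoid_mul_rexp_neg, ← mul_assoc]
  exact le_mul_of_one_le_left (Real.exp_nonneg _) (by linarith)

lemma polynomial_mul_sigmoid_isLittleO_sigmoid (p : ℝ[X]) {γ δ : ℝ} (hγ : 0 ≤ γ) (hγδ : γ < δ) :
    (fun x ↦ p.eval x * Real.sigmoid (-(δ * x))) =o[atTop] fun x ↦ Real.sigmoid (-(γ * x)) := by
  have upper : (fun x ↦ Real.sigmoid (-(δ * x))) =O[atTop] fun x ↦ Real.exp (-(δ * x)) := by
    refine .of_norm_le fun x ↦ ?_
    rw [Real.norm_of_nonneg (Real.sigmoid_nonneg _)]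
    exact sigmoid_neg_le_exp_neg _
  have lower : (fun x ↦ Real.exp (-(γ * x))) =O[atTop] fun x ↦ Real.sigmoid (-(γ * x)) := by
    refine .of_bound 2 ?_
    filter_upwards [eventually_ge_atTop 0] with x hx
    rw [Real.norm_of_nonneg (Real.exp_nonneg _), Real.norm_of_nonneg (Real.sigmoid_nonneg _)]
    exact exp_neg_le_two_mul_sigmoid_neg (mul_nonneg hγ hx)
  refine IsLittleO.trans_isBigO ?_ lower
  refine ((polynomial_isLittleO_exp_mul p (sub_pos.mpr hγδ)).mul_isBigO upper).congr_right ?_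
  intro x
  rw [← Real.exp_add]
  ring_nf

lemma tendsto_polynomial_mul_sigmoid (p : ℝ[X]) {γ : ℝ} (hγ : 0 < γ) :
    Tendsto (fun x ↦ p.eval x * Real.sigmoid (-(γ * x))) atTop (𝓝 0) := by
  have h := polynomial_mul_sigmoid_isLittleO_sigmoid p le_rfl hγ
  simp only [zero_mul, neg_zero, Real.sigmoid_zero] at h
  exact (isLittleO_const_iff (by norm_num)).mp h

lemma polynomial_eq_zero_of_mul_sigmoid_eq {q r : ℝ[X]} {γ δ : ℝ} (hγ : 0 ≤ γ) (hγδ : γ < δ)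
    (h : ∀ᶠ x in atTop,
      q.eval x * Real.sigmoid (-(γ * x)) = r.eval x * Real.sigmoid (-(δ * x))) :
    q = 0 := by
  refine polynomial_eq_zero_of_tendsto_zero ?_
  refine (polynomial_mul_sigmoid_isLittleO_sigmoid r hγ hγδ).tendsto_div_nhds_zero.congr' ?_
  filter_upwards [h] with x hx
  rw [← hx, mul_div_cancel_right₀ _ (Real.sigmoid_pos _).ne']

lemma rate_le_of_mul_sigmoid_eq {q r : ℝ[X]} {γ δ : ℝ} (hγ : 0 ≤ γ) (hr : r ≠ 0)
    (h : ∀ᶠ x in atTop,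
      q.eval x * Real.sigmoid (-(γ * x)) = r.eval x * Real.sigmoid (-(δ * x))) :
    δ ≤ γ := by
  by_contra! hγδ
  have hq : q = 0 := polynomial_eq_zero_of_mul_sigmoid_eq hγ hγδ h
  refine hr (polynomial_eq_of_eventually_eval_eq ?_)
  filter_upwards [h] with x hx
  rw [hq, eval_zero, zero_mul, zero_eq_mul] at hx
  simpa only [eval_zero] using hx.resolve_right (Real.sigmoid_pos _).ne'

lemma eq_of_mul_sigmoid_eq {q r : ℝ[X]} {γ δ : ℝ} (hγ : 0 ≤ γ) (hδ : 0 ≤ δ) (hr : r ≠ 0)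
    (h : ∀ᶠ x in atTop,
      q.eval x * Real.sigmoid (-(γ * x)) = r.eval x * Real.sigmoid (-(δ * x))) :
    q = r ∧ γ = δ := by
  have hδγ : δ ≤ γ := rate_le_of_mul_sigmoid_eq hγ hr h
  obtain rfl : δ = γ := hδγ.eq_of_not_lt fun hlt ↦
    hr (polynomial_eq_zero_of_mul_sigmoid_eq hδ hlt (h.mono fun _ ↦ Eq.symm))
  refine ⟨polynomial_eq_of_eventually_eval_eq ?_, rfl⟩
  exact h.mono fun x hx ↦ mul_right_cancel₀ (Real.sigmoid_pos _).ne' hx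

lemma eq_of_add_mul_sigmoid_eq {p q r : ℝ[X]} {γ δ : ℝ} (hγ : 0 < γ) (hδ : 0 < δ) (hr : r ≠ 0)
    (h : ∀ᶠ x in atTop, p.eval x + q.eval x * Real.sigmoid (-(γ * x)) =
      r.eval x * Real.sigmoid (-(δ * x))) :
    p = 0 ∧ q = r ∧ γ = δ := by
  have hp : p = 0 := by
    have hlim := (tendsto_polynomial_mul_sigmoid r hδ).sub (tendsto_polynomial_mul_sigmoid q hγ)
    rw [sub_zero] at hlim
    refine polynomial_eq_zero_of_tendsto_zero (hlim.congr' ?_)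
    exact h.mono fun x hx ↦ (eq_sub_of_add_eq hx).symm
  simp only [hp, eval_zero, zero_add] at h
  exact ⟨hp, eq_of_mul_sigmoid_eq hγ.le hδ.le hr h⟩

lemma stgarchF_eq_sigmoid_sub (x γ : ℝ) :
    stgarchF x γ = Real.sigmoid (-(γ * x)) - 1 / 2 := by
  rw [stgarchF, Real.sigmoid_def, neg_neg, one_div (1 + _)]

lemma stgarchF_zero_right (x : ℝ) : stgarchF x 0 = 0 := by
  norm_num [stgarchF_eq_sigmoid_sub]

lemma stgarchF_identifiable_of_pos {p q r : ℝ[X]} {γ δ : ℝ} (hγ : 0 < γ) (hδ : 0 < δ)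
    (hr : r ≠ 0)
    (h : ∀ᶠ x in atTop,
      p.eval x + q.eval x * stgarchF x γ - r.eval x * stgarchF x δ = 0) :
    p = 0 ∧ q = r ∧ γ = δ := by
  have htail : ∀ᶠ x in atTop,
      (p + C (1 / 2) * (r - q)).eval x + q.eval x * Real.sigmoid (-(γ * x)) =
        r.eval x * Real.sigmoid (-(δ * x)) := by
    filter_upwards [h] with x hx
    simp only [stgarchF_eq_sigmoid_sub] at hx
    simp only [eval_add, eval_mul, eval_C, eval_sub]
    linarith
  obtain ⟨hp, rfl, hγδ⟩ := eq_of_add_mul_sigmoid_eq hγ hδ hr htail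
  rw [sub_self, mul_zero, add_zero] at hp
  exact ⟨hp, rfl, hγδ⟩

theorem stgarch_transition_identifiable_general {p q r : ℝ[X]} {γ γ0 : ℝ} (hγ0 : 0 < γ0)
    (hγ : 0 ≤ γ) (hr : r ≠ 0)
    (h : ∀ᶠ x in atTop,
      p.eval x + q.eval x * stgarchF x γ - r.eval x * stgarchF x γ0 = 0) :
    p = 0 ∧ q = r ∧ γ = γ0 := by
  rcases hγ.eq_or_lt with rfl | hγ
  · -- A vanishing transition may be traded for `0 * stgarchF x γ0`, which forces `r = 0`.
    have h' : ∀ᶠ x in atTop,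
        p.eval x + (0 : ℝ[X]).eval x * stgarchF x γ0 - r.eval x * stgarchF x γ0 = 0 := by
      simpa only [stgarchF_zero_right, mul_zero, eval_zero, zero_mul] using h
    exact absurd (stgarchF_identifiable_of_pos hγ0 hγ0 hr h').2.1.symm hr
  · exact stgarchF_identifiable_of_pos hγ hγ0 hr h

lemma C_mul_X_sq_add_C_inj {R : Type*} [Semiring R] {a b c d : R} :
    C a * X ^ 2 + C b = C c * X ^ 2 + C d ↔ a = c ∧ b = d := by
  refine ⟨fun h ↦ ⟨?_, ?_⟩, fun ⟨hac, hbd⟩ ↦ by rw [hac, hbd]⟩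
  · simpa [coeff_C] using congrArg (coeff · 2) h
  · simpa using congrArg (coeff · 0) h

/-- Identifiability of the transition parameters in the STGARCH model: if
`a σ² x² + (c σ² x² + B) F(σx, γ) − (c° σ² x² + B°) F(σx, γ°) = 0` for all real `x`,
where `σ > 0`, `γ° > 0`, `γ ≥ 0` and `(c°, B°) ≠ (0, 0)`, then
`a = 0`, `c = c°`, `B = B°` and `γ = γ°`. -/
theorem stgarch_transition_identifiable
    (σ γ γ0 a c c0 B B0 : ℝ) (hσ : 0 < σ) (hγ0 : 0 < γ0) (hγ : 0 ≤ γ)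
    (hne : (c0, B0) ≠ (0, 0))
    (h : ∀ x : ℝ,
      a * σ ^ 2 * x ^ 2 + (c * σ ^ 2 * x ^ 2 + B) * stgarchF (σ * x) γ
        - (c0 * σ ^ 2 * x ^ 2 + B0) * stgarchF (σ * x) γ0 = 0) :
    a = 0 ∧ c = c0 ∧ B = B0 ∧ γ = γ0 := by
  have hr : C c0 * X ^ 2 + C B0 ≠ 0 := by
    rwa [Ne, Prod.mk.injEq, ← C_mul_X_sq_add_C_inj, C_0, zero_mul, add_zero] at hne
  have hpoly (y : ℝ) : (C a * X ^ 2).eval y + (C c * X ^ 2 + C B).eval y * stgarchF y γ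
      - (C c0 * X ^ 2 + C B0).eval y * stgarchF y γ0 = 0 := by
    have hy : σ * (y / σ) = y := mul_div_cancel₀ y hσ.ne'
    simpa only [mul_assoc, ← mul_pow, hy, eval_add, eval_mul, eval_C, eval_pow, eval_X]
      using h (y / σ)
  obtain ⟨hp, hq, hγγ0⟩ :=
    stgarch_transition_identifiable_general hγ0 hγ hr (.of_forall hpoly)
  obtain ⟨hc, hB⟩ := C_mul_X_sq_add_C_inj.mp hq
  exact ⟨by simpa using hp, hc, hB, hγγ0⟩
end

section
/- Fix integers p ≥ 1 and M ≥ 1. For a parameter θ = (β₀, β₁, …, β_M, γ₁, …, γ_M, c₁, …, c_M, d) with β_i ∈ ℝ^{p+1} for 0 ≤ i ≤ M, γ_i, c_i ∈ ℝ, and d ∈ {1,…,p}, define m(x, θ) = β₀ᵀx̃ + Σ_{i=1}^M β_iᵀx̃ · G(x_d; γ_i, c_i) for x = (x₁,…,x_p) ∈ ℝ^p, where x̃ = (1, x₁, …, x_p) ∈ ℝ^{p+1}. Let θ° and θ be two such parameters satisfying: (a) β_i° ≠ 0 ∈ ℝ^{p+1} for every i = 1,…,M; (c) γ_i° > 0 and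 γ_i > 0 for all i, −∞ < c₁° < ⋯ < c_M° < ∞ and −∞ < c₁ < ⋯ < c_M < ∞. Let Z be a random vector in ℝ^p on a probability space whose distribution has support equal to all of ℝ^p. If m(Z, θ°) = m(Z, θ) almost surely, then θ = θ°. -/
open MeasureTheory

/-- The logistic transition function `G(y; γ, c) = 1/(1+e^{-γ(y-c)})`. -/
noncomputable def logisticG (γ c y : ℝ) : ℝ := 1 / (1 + Real.exp (-γ * (y - c)))

/-- The support of a Borel measure: the set of points all of whose open neighborhoods have
positive measure. -/
def measSupport {α : Type*} [TopologicalSpace α] [MeasurableSpace α]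
    (μ : MeasureTheory.Measure α) : Set α :=
  {x | ∀ U : Set α, IsOpen U → x ∈ U → 0 < μ U}

/-- The conditional mean function of the multiple-regime STAR model of order `p` with
`M + 1` regimes: `m(x, θ) = β₀ᵀ x̃ + ∑ᵢ βᵢᵀ x̃ · G(x_d; γᵢ, cᵢ)` with
`x̃ = (1, x₁, …, x_p)`. -/
noncomputable def starMean (p M : ℕ) (β0 : Fin (p + 1) → ℝ)
    (β : Fin M → Fin (p + 1) → ℝ) (γ c : Fin M → ℝ) (d : Fin p)
    (x : Fin p → ℝ) : ℝ :=
  (∑ j, β0 j * (Fin.cons 1 x : Fin (p + 1) → ℝ) j) +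
    ∑ i, (∑ j, β i j * (Fin.cons 1 x : Fin (p + 1) → ℝ) j) * logisticG (γ i) (c i) (x d)

/-!
Restricted to a line parallel to a coordinate axis, a STAR mean is an affine function plus a sum of
affine functions divided by denominators `1 + exp (-γ (y - c))`. After clearing denominators this
is an entire function of `y`, so it vanishes at complex `y` as soon as it vanishes on the real
line. At the zero `c - iπ/γ` of the denominator with the largest `γ` no other denominator vanishes,
which forces the corresponding affine numerator to vanish there; having real coefficients and a
nonreal zero, it is `0`. Descending on `γ`, the logistic regimes are linearly independent over
affine functions, so the mean determines the regime coefficients, recorded as a finitely supported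
function of `(γ, c)`.
-/

section EntireFunctions

theorem eq_of_forall_ofReal_eq {f g : ℂ → ℂ} (hf : Differentiable ℂ f)
    (hg : Differentiable ℂ g) (h : ∀ y : ℝ, f y = g y) : f = g := by
  have hf' : AnalyticOnNhd ℂ f Set.univ := fun z _ ↦ hf.analyticAt z
  have hg' : AnalyticOnNhd ℂ g Set.univ := fun z _ ↦ hg.analyticAt z
  refine hf'.eq_of_frequently_eq (z₀ := ((0 : ℝ) : ℂ)) hg' ?_
  have htendsto : Filter.Tendsto Complex.ofReal (nhdsWithin 0 {0}ᶜ)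
      (nhdsWithin ((0 : ℝ) : ℂ) {((0 : ℝ) : ℂ)}ᶜ) :=
    Complex.continuous_ofReal.continuousWithinAt.tendsto_nhdsWithin fun y hy ↦ by simpa using hy
  exact htendsto.frequently (Filter.Frequently.of_forall h)

variable {ι : Type*} {s : Finset ι} {f₀ : ℂ → ℂ} {f D : ι → ℂ → ℂ}

theorem add_sum_div_mul_prod_eq {K : Type*} [Field K] [DecidableEq ι] (a₀ : K) (a b : ι → K)
    (hb : ∀ i ∈ s, b i ≠ 0) :
    (a₀ + ∑ i ∈ s, a i / b i) * ∏ j ∈ s, b j =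
      a₀ * ∏ j ∈ s, b j + ∑ i ∈ s, a i * ∏ j ∈ s.erase i, b j := by
  rw [add_mul, Finset.sum_mul]
  congr 1
  refine Finset.sum_congr rfl fun i hi ↦ ?_
  rw [← Finset.mul_prod_erase s b hi, ← mul_assoc, div_mul_cancel₀ _ (hb i hi)]

theorem numerator_eq_zero_of_denominator_eq_zero (hf₀ : Differentiable ℂ f₀)
    (hf : ∀ i ∈ s, Differentiable ℂ (f i)) (hD : ∀ i ∈ s, Differentiable ℂ (D i))
    (hD_real : ∀ i ∈ s, ∀ y : ℝ, D i y ≠ 0) (h : ∀ y : ℝ, f₀ y + ∑ i ∈ s, f i y / D i y = 0)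
    {k : ι} (hk : k ∈ s) {w : ℂ} (hw : D k w = 0) (hw' : ∀ j ∈ s, j ≠ k → D j w ≠ 0) :
    f k w = 0 := by
  classical
  let F : ℂ → ℂ := fun z ↦ f₀ z * ∏ j ∈ s, D j z + ∑ i ∈ s, f i z * ∏ j ∈ s.erase i, D j z
  have hF : Differentiable ℂ F :=
    (hf₀.mul (.fun_finsetProd hD)).add <| .fun_sum fun i hi ↦
      (hf i hi).mul (.fun_finsetProd fun j hj ↦ hD j (Finset.mem_of_mem_erase hj))
  have hF_zero : F = 0 := eq_of_forall_ofReal_eq hF (differentiable_const 0) fun y ↦ by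
    calc F y = (f₀ y + ∑ i ∈ s, f i y / D i y) * ∏ j ∈ s, D j y :=
          (add_sum_div_mul_prod_eq (f₀ y) (f · y) (D · y) (hD_real · · y)).symm
      _ = 0 := by rw [h, zero_mul]
  have hF_w : F w = f k w * ∏ j ∈ s.erase k, D j w := by
    have hprod_zero {t : Finset ι} (hkt : k ∈ t) : ∏ j ∈ t, D j w = 0 := Finset.prod_eq_zero hkt hw
    simp only [F, hprod_zero hk, mul_zero, zero_add]
    refine Finset.sum_eq_single_of_mem k hk fun j _ hjk ↦ ?_
    rw [hprod_zero (Finset.mem_erase.2 ⟨hjk.symm, hk⟩), mul_zero]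
  have hprod : ∏ j ∈ s.erase k, D j w ≠ 0 := Finset.prod_ne_zero_iff.2 fun j hj ↦
    hw' j (Finset.mem_of_mem_erase hj) (Finset.ne_of_mem_erase hj)
  exact (mul_eq_zero.1 (hF_w.symm.trans (congrFun hF_zero w))).resolve_right hprod

theorem eq_zero_of_add_mul_eq_zero_of_im_ne_zero {a b : ℝ} {w : ℂ} (hw : w.im ≠ 0)
    (h : (a : ℂ) + b * w = 0) : a = 0 ∧ b = 0 := by
  have hb : b = 0 := by simpa [hw] using congrArg Complex.im h
  exact ⟨by simpa [hb] using h, hb⟩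

end EntireFunctions

/-- The denominator of the logistic transition function, extended to complex arguments. -/
noncomputable def logisticDenom (γ c : ℝ) (w : ℂ) : ℂ := 1 + Complex.exp (-γ * (w - c))

/-- The zero `c - iπ/γ` of `logisticDenom γ c`, one of the two nearest to the real axis. -/
noncomputable def logisticPole (γ c : ℝ) : ℂ := c - (Real.pi / γ : ℝ) * Complex.I

theorem differentiable_logisticDenom (γ c : ℝ) : Differentiable ℂ (logisticDenom γ c) := by
  unfold logisticDenom
  fun_prop

theorem logisticDenom_ofReal (γ c y : ℝ) :
    logisticDenom γ c y = (1 + Real.exp (-γ * (y - c)) : ℝ) := by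
  simp [logisticDenom]

theorem logisticDenom_ofReal_ne_zero (γ c y : ℝ) : logisticDenom γ c y ≠ 0 := by
  rw [logisticDenom_ofReal]
  exact Complex.ofReal_ne_zero.2 (by positivity)

theorem ofReal_logisticG (γ c y : ℝ) : (logisticG γ c y : ℂ) = 1 / logisticDenom γ c y := by
  rw [logisticDenom_ofReal, logisticG, Complex.ofReal_div, Complex.ofReal_one]

theorem continuous_logisticG (γ c : ℝ) : Continuous (logisticG γ c) :=
  continuous_const.div (by fun_prop) fun y ↦ by positivity

theorem logisticDenom_logisticPole {γ : ℝ} (hγ : γ ≠ 0) (c : ℝ) :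
    logisticDenom γ c (logisticPole γ c) = 0 := by
  have hexponent : -(γ : ℂ) * (logisticPole γ c - c) = Real.pi * Complex.I := by
    have : (γ : ℂ) ≠ 0 := Complex.ofReal_ne_zero.2 hγ
    simp only [logisticPole, Complex.ofReal_div]
    field_simp
    ring
  rw [logisticDenom, hexponent, Complex.exp_pi_mul_I, add_neg_cancel]

theorem logisticPole_im_ne_zero {γ : ℝ} (hγ : γ ≠ 0) (c : ℝ) : (logisticPole γ c).im ≠ 0 := by
  simp [logisticPole, Real.pi_ne_zero, hγ]

theorem exists_int_of_logisticDenom_eq_zero {γ c : ℝ} {w : ℂ} (h : logisticDenom γ c w = 0) :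
    ∃ n : ℤ, -γ * (w - c) = (2 * n + 1) * (Real.pi * Complex.I) := by
  have hexp : Complex.exp (-γ * (w - c)) = Complex.exp (Real.pi * Complex.I) := by
    rw [Complex.exp_pi_mul_I]
    exact eq_neg_of_add_eq_zero_right h
  obtain ⟨n, hn⟩ := Complex.exp_eq_exp_iff_exists_int.1 hexp
  exact ⟨n, by rw [hn]; ring⟩

theorem eq_of_logisticDenom_logisticPole_eq_zero {γ c γ' c' : ℝ} (hγ' : 0 < γ') (hle : γ' ≤ γ)
    (h : logisticDenom γ' c' (logisticPole γ c) = 0) : γ' = γ ∧ c' = c := by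
  have hγ : 0 < γ := hγ'.trans_le hle
  obtain ⟨n, hn⟩ := exists_int_of_logisticDenom_eq_zero h
  have hre : γ' * (c - c') = 0 := by
    simpa [logisticPole] using congrArg Complex.re hn
  have him : γ' * (Real.pi / γ) = (2 * n + 1) * Real.pi := by
    simpa [logisticPole] using congrArg Complex.im hn
  have hratio : γ' = (2 * n + 1) * γ := by
    have := Real.pi_pos
    field_simp at him
    linarith
  have hn_zero : n = 0 := by
    have hlower : (-1 : ℝ) < n := by nlinarith
    have hupper : (n : ℝ) < 1 := by nlinarith
    have : -1 < n := by exact_mod_cast hlower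
    have : n < 1 := by exact_mod_cast hupper
    omega
  have hc : c - c' = 0 := (mul_eq_zero.1 hre).resolve_left hγ'.ne'
  exact ⟨by simpa [hn_zero] using hratio, (sub_eq_zero.1 hc).symm⟩

theorem affine_coeff_eq_zero_of_forall_le {s : Finset (ℝ × ℝ)} (hs : ∀ q ∈ s, 0 < q.1) {A B : ℝ}
    {a b : ℝ × ℝ → ℝ}
    (h : ∀ y, A + B * y + ∑ q ∈ s, (a q + b q * y) * logisticG q.1 q.2 y = 0)
    {k : ℝ × ℝ} (hk : k ∈ s) (hmax : ∀ q ∈ s, q.1 ≤ k.1) : a k = 0 ∧ b k = 0 := by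
  have hk_ne : k.1 ≠ 0 := (hs k hk).ne'
  refine eq_zero_of_add_mul_eq_zero_of_im_ne_zero (logisticPole_im_ne_zero hk_ne k.2) ?_
  refine numerator_eq_zero_of_denominator_eq_zero (f₀ := fun w ↦ A + B * w)
    (f := fun q w ↦ a q + b q * w) (D := fun q ↦ logisticDenom q.1 q.2) (by fun_prop)
    (fun q _ ↦ by fun_prop) (fun q _ ↦ differentiable_logisticDenom q.1 q.2)
    (fun q _ ↦ logisticDenom_ofReal_ne_zero q.1 q.2) (fun y ↦ ?_) hk
    (logisticDenom_logisticPole hk_ne k.2) fun q hq hqk hzero ↦ ?_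
  · have := congrArg Complex.ofReal (h y)
    push_cast [ofReal_logisticG] at this
    simpa only [mul_one_div] using this
  · obtain ⟨hγ, hc⟩ := eq_of_logisticDenom_logisticPole_eq_zero (hs q hq) (hmax q hq) hzero
    exact hqk (Prod.ext hγ hc)

theorem affine_coeffs_eq_zero {s : Finset (ℝ × ℝ)} (hs : ∀ q ∈ s, 0 < q.1) {A B : ℝ}
    {a b : ℝ × ℝ → ℝ}
    (h : ∀ y, A + B * y + ∑ q ∈ s, (a q + b q * y) * logisticG q.1 q.2 y = 0) :
    ∀ q ∈ s, a q = 0 ∧ b q = 0 := by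
  induction s using Finset.induction_on_max_value (Prod.fst : ℝ × ℝ → ℝ) with
  | empty => simp
  | insert k s hks hmax ih =>
    have hk : a k = 0 ∧ b k = 0 := affine_coeff_eq_zero_of_forall_le hs h
      (Finset.mem_insert_self k s) (Finset.forall_mem_insert _ _ _ |>.2 ⟨le_rfl, hmax⟩)
    refine Finset.forall_mem_insert _ _ _ |>.2 ⟨hk, ih (fun q hq ↦ hs q (by simp [hq])) fun y ↦ ?_⟩
    simpa [Finset.sum_insert hks, hk.1, hk.2] using h y

section AffineInCoord

variable {ι : Type*} [DecidableEq ι] {d : ι}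

/-- The functions on `ℝ^ι` whose restriction to every line parallel to the `d`-th coordinate axis
is affine; affineness is encoded as interpolation from the values at `0` and `1`. -/
def affineInCoord (d : ι) : Submodule ℝ ((ι → ℝ) → ℝ) where
  carrier := {f | ∀ x y, f (Function.update x d y) = f (Function.update x d 0) +
    (f (Function.update x d 1) - f (Function.update x d 0)) * y}
  add_mem' {f g} hf hg x y := by
    simp only [Pi.add_apply]
    rw [hf x y, hg x y]
    ring
  zero_mem' x y := by simp
  smul_mem' r f hf x y := by
    simp only [Pi.smul_apply, smul_eq_mul]
    rw [hf x y]
    ring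

theorem mul_mem_affineInCoord {f g : (ι → ℝ) → ℝ} (hf : f ∈ affineInCoord d)
    (hg : ∀ x y, g (Function.update x d y) = g x) : f * g ∈ affineInCoord d := fun x y ↦ by
  simp only [Pi.mul_apply, hg]
  rw [hf x y]
  ring

end AffineInCoord

section RegimeMean

variable {p : ℕ}

/-- The affine form `x ↦ vᵀ x̃` with `x̃ = (1, x₁, …, x_p)`, as a linear function of its
coefficient vector `v`. -/
def affineForm : (Fin (p + 1) → ℝ) →ₗ[ℝ] (Fin p → ℝ) → ℝ where
  toFun v x := v ⬝ᵥ Fin.cons 1 x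
  map_add' v w := funext fun _ ↦ add_dotProduct v w _
  map_smul' r v := funext fun _ ↦ smul_dotProduct r v _

theorem affineForm_apply (v : Fin (p + 1) → ℝ) (x : Fin p → ℝ) :
    affineForm v x = v 0 + ∑ j, v j.succ * x j := by
  simp [affineForm, dotProduct, Fin.sum_univ_succ]

theorem affineForm_injective : Function.Injective (affineForm (p := p)) := by
  refine (injective_iff_map_eq_zero _).2 fun v hv ↦ ?_
  have hv₀ : v 0 = 0 := by simpa [affineForm_apply] using congrFun hv 0
  funext j
  refine Fin.cases hv₀ (fun k ↦ ?_) j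
  simpa [affineForm_apply, hv₀, Pi.single_apply] using congrFun hv (Pi.single k 1)

theorem continuous_affineForm (v : Fin (p + 1) → ℝ) : Continuous (affineForm v) := by
  rw [funext (affineForm_apply v)]
  fun_prop

theorem affineForm_mem_affineInCoord (v : Fin (p + 1) → ℝ) (d : Fin p) :
    affineForm v ∈ affineInCoord d := fun x y ↦ by
  have hsplit (z : ℝ) : affineForm v (Function.update x d z) =
      v 0 + (v d.succ * z + ∑ j ∈ Finset.univ.erase d, v j.succ * x j) := by
    rw [affineForm_apply, ← Finset.add_sum_erase _ _ (Finset.mem_univ d), Function.update_self]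
    congr 2
    refine Finset.sum_congr rfl fun j hj ↦ ?_
    rw [Function.update_of_ne (Finset.ne_of_mem_erase hj)]
  simp only [hsplit]
  ring

/-- The nonlinear part `x ↦ ∑ vᵀ x̃ · G(x_d; γ, c)` of a STAR mean, as a linear function of the
finitely supported family `(γ, c) ↦ v` of regime coefficients. -/
noncomputable def regimeMean (d : Fin p) :
    (ℝ × ℝ →₀ Fin (p + 1) → ℝ) →ₗ[ℝ] (Fin p → ℝ) → ℝ :=
  Finsupp.lsum ℝ fun q ↦ LinearMap.mulRight ℝ (fun x ↦ logisticG q.1 q.2 (x d)) ∘ₗ affineForm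

theorem regimeMean_eq_sum (d : Fin p) (F : ℝ × ℝ →₀ Fin (p + 1) → ℝ) :
    regimeMean d F =
      ∑ q ∈ F.support, affineForm (F q) * fun x ↦ logisticG q.1 q.2 (x d) := rfl

theorem regimeMean_mem_affineInCoord {d e : Fin p} (hde : d ≠ e)
    (F : ℝ × ℝ →₀ Fin (p + 1) → ℝ) : regimeMean d F ∈ affineInCoord e := by
  rw [regimeMean_eq_sum]
  refine sum_mem fun q _ ↦ mul_mem_affineInCoord (affineForm_mem_affineInCoord _ e) fun x y ↦ ?_
  rw [Function.update_of_ne hde]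

theorem eq_zero_of_regimeMean_mem_affineInCoord {d : Fin p} {F : ℝ × ℝ →₀ Fin (p + 1) → ℝ}
    (hF : ∀ q ∈ F.support, 0 < q.1) (h : regimeMean d F ∈ affineInCoord d) : F = 0 := by
  suffices hform : ∀ q ∈ F.support, affineForm (F q) = 0 by
    refine Finsupp.support_eq_empty.1 (Finset.eq_empty_of_forall_notMem fun q hq ↦ ?_)
    exact Finsupp.mem_support_iff.1 hq ((map_eq_zero_iff _ affineForm_injective).1 (hform q hq))
  intro q hq
  funext x
  let R := regimeMean d F
  let x₀ := Function.update x d 0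
  let x₁ := Function.update x d 1
  have hcoeffs := affine_coeffs_eq_zero hF (A := -R x₀) (B := -(R x₁ - R x₀))
    (a := fun q ↦ affineForm (F q) x₀)
    (b := fun q ↦ affineForm (F q) x₁ - affineForm (F q) x₀) (fun y ↦ ?_) q hq
  · calc affineForm (F q) x
        = affineForm (F q) x₀ + (affineForm (F q) x₁ - affineForm (F q) x₀) * x d := by
          simpa using affineForm_mem_affineInCoord (F q) d x (x d)
      _ = 0 := by rw [hcoeffs.2, hcoeffs.1, zero_mul, add_zero]
  · have hsum : R (Function.update x d y) = ∑ q ∈ F.support,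
        (affineForm (F q) x₀ + (affineForm (F q) x₁ - affineForm (F q) x₀) * y) *
          logisticG q.1 q.2 y := by
      simp only [R, regimeMean_eq_sum, Finset.sum_apply, Pi.mul_apply, Function.update_self]
      exact Finset.sum_congr rfl fun q _ ↦ by
        rw [affineForm_mem_affineInCoord (F q) d x y]
    have hR : R (Function.update x d y) = R x₀ + (R x₁ - R x₀) * y := h x y
    rw [← hsum, hR]
    ring

theorem eq_of_affineForm_add_regimeMean_eq {v v' : Fin (p + 1) → ℝ} {d d' : Fin p}
    {F F' : ℝ × ℝ →₀ Fin (p + 1) → ℝ} (hF : ∀ q ∈ F.support, 0 < q.1)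
    (hF' : ∀ q ∈ F'.support, 0 < q.1) (hF_ne : F ≠ 0)
    (h : affineForm v + regimeMean d F = affineForm v' + regimeMean d' F') :
    v = v' ∧ d = d' ∧ F = F' := by
  have hd : d' = d := by
    by_contra hne
    refine hF_ne (eq_zero_of_regimeMean_mem_affineInCoord hF (d := d) ?_)
    rw [eq_sub_of_add_eq' h]
    exact sub_mem (add_mem (affineForm_mem_affineInCoord v' d)
      (regimeMean_mem_affineInCoord hne F')) (affineForm_mem_affineInCoord v d)
  subst hd
  have hsub : F - F' = 0 := by
    refine eq_zero_of_regimeMean_mem_affineInCoord (d := d') (fun q hq ↦ ?_) ?_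
    · exact (Finset.mem_union.1 (Finsupp.support_sub hq)).elim (hF q) (hF' q)
    · have : regimeMean d' (F - F') = affineForm (v' - v) := by
        rw [map_sub, map_sub]
        linear_combination h
      exact this ▸ affineForm_mem_affineInCoord _ d'
  obtain rfl : F = F' := sub_eq_zero.1 hsub
  exact ⟨affineForm_injective (add_right_cancel h), rfl, rfl⟩

end RegimeMean

theorem exists_perm_of_mapDomain_eq {ι α V : Type*} [Finite ι] [AddCommMonoid V]
    {q q' : ι → α} {v v' : ι →₀ V} (hq : Function.Injective q) (hv : ∀ i, v i ≠ 0)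
    (h : v.mapDomain q = v'.mapDomain q') :
    ∃ σ : Equiv.Perm ι, q = q' ∘ σ ∧ ⇑v = v' ∘ σ := by
  classical
  have hmem (i : ι) : ∃ j, q' j = q i := by
    have hi : q i ∈ (v'.mapDomain q').support := by
      rw [← h, Finsupp.mem_support_iff, Finsupp.mapDomain_apply hq]
      exact hv i
    obtain ⟨j, -, hj⟩ := Finset.mem_image.1 (Finsupp.mapDomain_support hi)
    exact ⟨j, hj⟩
  choose τ hτ using hmem
  have hτ_inj : Function.Injective τ := fun i j hij ↦ hq (by rw [← hτ, ← hτ, hij])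
  let σ : Equiv.Perm ι := Equiv.ofBijective τ (Finite.injective_iff_bijective.1 hτ_inj)
  have hσ : q = q' ∘ σ := funext fun i ↦ (hτ i).symm
  have hq' : Function.Injective q' := (Equiv.injective_comp σ q').1 (hσ ▸ hq)
  refine ⟨σ, hσ, funext fun i ↦ ?_⟩
  calc v i = v.mapDomain q (q i) := (Finsupp.mapDomain_apply hq v i).symm
    _ = v'.mapDomain q' (q' (σ i)) := by rw [h, hσ, Function.comp_apply]
    _ = v' (σ i) := Finsupp.mapDomain_apply hq' v' (σ i)

theorem perm_eq_one_of_strictMono_comp {ι α : Type*} [LinearOrder ι] [Finite ι] [Preorder α]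
    {c : ι → α} {σ : Equiv.Perm ι} (hc : StrictMono c) (hcσ : StrictMono (c ∘ σ)) : σ = 1 := by
  have hσ : StrictMono σ := fun i j hij ↦ hc.lt_iff_lt.1 (hcσ hij)
  exact Equiv.coe_fn_injective hσ.eq_id

section StarMean

variable {p M : ℕ}

/-- The regime coefficients of a STAR model as a finitely supported function of `(γ, c)`; regimes
with equal `(γ, c)` are merged by adding their coefficient vectors. -/
noncomputable def regimeCoeff (β : Fin M → Fin (p + 1) → ℝ) (γ c : Fin M → ℝ) :
    ℝ × ℝ →₀ Fin (p + 1) → ℝ :=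
  (Finsupp.equivFunOnFinite.symm β).mapDomain fun i ↦ (γ i, c i)

theorem pos_of_mem_support_regimeCoeff {β : Fin M → Fin (p + 1) → ℝ} {γ c : Fin M → ℝ}
    (hγ : ∀ i, 0 < γ i) : ∀ q ∈ (regimeCoeff β γ c).support, 0 < q.1 := fun q hq ↦ by
  classical
  obtain ⟨i, -, rfl⟩ := Finset.mem_image.1 (Finsupp.mapDomain_support hq)
  exact hγ i

theorem starMean_eq_affineForm_add_regimeMean (β₀ : Fin (p + 1) → ℝ)
    (β : Fin M → Fin (p + 1) → ℝ) (γ c : Fin M → ℝ) (d : Fin p) :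
    starMean p M β₀ β γ c d = affineForm β₀ + regimeMean d (regimeCoeff β γ c) := by
  have hregimes : regimeMean d (regimeCoeff β γ c) =
      ∑ i, affineForm (β i) * fun x ↦ logisticG (γ i) (c i) (x d) := by
    simp [regimeMean, regimeCoeff, Finsupp.mapDomain, Finsupp.sum_fintype]
  rw [hregimes]
  funext x
  simp [starMean, affineForm, dotProduct]

theorem continuous_starMean (β₀ : Fin (p + 1) → ℝ) (β : Fin M → Fin (p + 1) → ℝ)
    (γ c : Fin M → ℝ) (d : Fin p) : Continuous (starMean p M β₀ β γ c d) :=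
  (continuous_affineForm β₀).add <| continuous_finsetSum _ fun i _ ↦
    (continuous_affineForm (β i)).mul ((continuous_logisticG _ _).comp (continuous_apply d))

end StarMean

theorem isOpenPosMeasure_of_measSupport_eq_univ {α : Type*} [TopologicalSpace α]
    [MeasurableSpace α] {μ : Measure α} (h : measSupport μ = Set.univ) : μ.IsOpenPosMeasure where
  open_pos U hU := fun ⟨x, hx⟩ ↦ (h.ge (Set.mem_univ x) U hU hx).ne'

theorem eq_of_ae_eq_comp {Ω α β : Type*} [MeasurableSpace Ω] {P : Measure Ω} [TopologicalSpace α]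
    [MeasurableSpace α] [OpensMeasurableSpace α] [TopologicalSpace β] [T2Space β] {Z : Ω → α}
    (hZ : AEMeasurable Z P) (hsupp : measSupport (P.map Z) = Set.univ) {f g : α → β}
    (hf : Continuous f) (hg : Continuous g) (h : ∀ᵐ ω ∂P, f (Z ω) = g (Z ω)) : f = g := by
  have := isOpenPosMeasure_of_measSupport_eq_univ hsupp
  refine Measure.eq_of_ae_eq (μ := P.map Z) ?_ hf hg
  exact (ae_map_iff hZ (isClosed_eq hf hg).measurableSet).2 h

theorem star_identifiable_general {Ω : Type*} [MeasurableSpace Ω] {P : Measure Ω} {p M : ℕ}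
    (hM : 1 ≤ M) {β0t β0 : Fin (p + 1) → ℝ} {βt β : Fin M → Fin (p + 1) → ℝ}
    {γt ct γ c : Fin M → ℝ} {dt d : Fin p} (ha : ∀ i, βt i ≠ 0)
    (hγt : ∀ i, 0 < γt i) (hγ : ∀ i, 0 < γ i)
    (hinj : Function.Injective fun i ↦ (γt i, ct i))
    {Z : Ω → Fin p → ℝ} (hZ : AEMeasurable Z P) (hsupp : measSupport (P.map Z) = Set.univ)
    (heq : ∀ᵐ ω ∂P, starMean p M β0t βt γt ct dt (Z ω) = starMean p M β0 β γ c d (Z ω)) :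
    β0t = β0 ∧ dt = d ∧ ∃ σ : Equiv.Perm (Fin M), βt = β ∘ σ ∧ γt = γ ∘ σ ∧ ct = c ∘ σ := by
  have hmean := eq_of_ae_eq_comp hZ hsupp (continuous_starMean β0t βt γt ct dt)
    (continuous_starMean β0 β γ c d) heq
  rw [starMean_eq_affineForm_add_regimeMean, starMean_eq_affineForm_add_regimeMean] at hmean
  have hne : regimeCoeff βt γt ct ≠ 0 := fun h ↦ ha ⟨0, hM⟩ <| by
    simpa [regimeCoeff, Finsupp.mapDomain_apply hinj] using
      DFunLike.congr_fun h (γt ⟨0, hM⟩, ct ⟨0, hM⟩)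
  obtain ⟨hβ0, hd, hcoeff⟩ := eq_of_affineForm_add_regimeMean_eq
    (pos_of_mem_support_regimeCoeff hγt) (pos_of_mem_support_regimeCoeff hγ) hne hmean
  obtain ⟨σ, hq, hβ⟩ := exists_perm_of_mapDomain_eq hinj ha hcoeff
  exact ⟨hβ0, hd, σ, hβ, funext fun i ↦ congrArg Prod.fst (congrFun hq i),
    funext fun i ↦ congrArg Prod.snd (congrFun hq i)⟩

/-- Identifiability of the multiple-regime STAR model: under (a) nondegenerate true regime
coefficients, (c) positive smoothing parameters and strictly increasing thresholds for
both parameter vectors, and a regressor `Z` whose distribution has full support `ℝᵖ`, if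
the conditional means coincide almost surely then the parameters coincide. -/
theorem star_identifiable
    {Ω : Type*} [MeasurableSpace Ω] (P : Measure Ω) [IsProbabilityMeasure P]
    (p M : ℕ) (hp : 1 ≤ p) (hM : 1 ≤ M)
    (β0t : Fin (p + 1) → ℝ) (βt : Fin M → Fin (p + 1) → ℝ) (γt ct : Fin M → ℝ)
    (dt : Fin p)
    (β0 : Fin (p + 1) → ℝ) (β : Fin M → Fin (p + 1) → ℝ) (γ c : Fin M → ℝ) (d : Fin p)
    (ha : ∀ i, βt i ≠ 0)
    (hγt : ∀ i, 0 < γt i) (hγ : ∀ i, 0 < γ i)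
    (hct : StrictMono ct) (hc : StrictMono c)
    (Z : Ω → (Fin p → ℝ)) (hZ : Measurable Z)
    (hsupp : measSupport (P.map Z) = Set.univ)
    (heq : ∀ᵐ ω ∂P,
      starMean p M β0t βt γt ct dt (Z ω) = starMean p M β0 β γ c d (Z ω)) :
    β0 = β0t ∧ β = βt ∧ γ = γt ∧ c = ct ∧ d = dt := by
  obtain ⟨rfl, rfl, σ, rfl, rfl, rfl⟩ := star_identifiable_general hM ha hγt hγ
    (fun i j hij ↦ hct.injective (congrArg Prod.snd hij)) hZ.aemeasurable hsupp heq
  obtain rfl : σ = 1 := perm_eq_one_of_strictMono_comp hc hct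
  exact ⟨rfl, rfl, rfl, rfl, rfl⟩
end
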